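/- arXiv:1802.08161 — 2 statements merged into one kernel-verified Lean document; each statement's English description precedes it below -/
import Mathlib

section
/- Let K ≥ 2, d ≥ 0 and T > 2d be integers. For a parameter array β = (β_{ij l})_{1≤i≤K, 1≤j≤K−1, 0≤l≤2d} of real numbers, define for each t ∈ {1,…,T} and each i ∈ {1,…,K}: g^β_{ij}(t) = exp(β_{ij0} + ∑_{l=1}^d [β_{ij,2l−1} cos(2πlt/T) + β_{ij,2l} sin(2πlt/T)]) for 1 ≤ j ≤ K−1, and the stochastic matrix Q^β(t) by Q^β_{ij}(t) = g^β_{ij}(t)/(1 + ∑_{j'=1}^{K−1} g^β_{ij'}(t)) for 1 ≤ j ≤ K−1 and Q^β_{iK}(t) = 1/(1 + ∑_{j'=1}^{K−1} g^β_{ij'}(t)). If two parameter arrays β and β' satisfy Q^β_{ij}(t) = Q^{β'}_{ij}(t) for all i,j ∈ {1,…,K} and all t ∈ {1,…,T}, then β = β'. -/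
open Real

/-- The positive weight g^β_{ij}(t) = exp(β_{ij0} + ∑_{l=1}^d [β_{ij,2l−1} cos(2πlt/T)
+ β_{ij,2l} sin(2πlt/T)]) of the softmax parametrization of SHMM transition matrices. -/
noncomputable def trigWeight (K d T : ℕ) (β : Fin K → Fin (K - 1) → Fin (2 * d + 1) → ℝ)
    (i : Fin K) (j : Fin (K - 1)) (t : ℕ) : ℝ :=
  Real.exp (β i j ⟨0, by omega⟩ + ∑ l : Fin d,
    (β i j ⟨2 * (l : ℕ) + 1, by have := l.isLt; omega⟩ *
        Real.cos (2 * Real.pi * ((l : ℕ) + 1) * t / T) +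
     β i j ⟨2 * (l : ℕ) + 2, by have := l.isLt; omega⟩ *
        Real.sin (2 * Real.pi * ((l : ℕ) + 1) * t / T)))

/-- The stochastic matrix Q^β(t) of the softmax (multinomial-logistic) parametrization:
row i has entries g^β_{ij}(t)/(1+∑_{j'} g^β_{ij'}(t)) for j ≤ K−1 and
1/(1+∑_{j'} g^β_{ij'}(t)) for j = K. -/
noncomputable def softmaxQ (K d T : ℕ) (β : Fin K → Fin (K - 1) → Fin (2 * d + 1) → ℝ)
    (t : ℕ) : Matrix (Fin K) (Fin K) ℝ :=
  Matrix.of fun i j =>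
    if h : (j : ℕ) < K - 1 then
      trigWeight K d T β i ⟨j, h⟩ t / (1 + ∑ j' : Fin (K - 1), trigWeight K d T β i j' t)
    else
      1 / (1 + ∑ j' : Fin (K - 1), trigWeight K d T β i j' t)

/-!
Each weight is the odds `Q i j / Q i K` against the reference category, so the matrices determine
the values of the trigonometric polynomials in the exponent. Multiplied by `z ^ d`, where
`z = exp (θ * I)`, a trigonometric polynomial of degree `d` becomes an algebraic polynomial of
degree at most `2 * d` in `z`, hence is determined by its values at more than `2 * d` points of the
unit circle.
-/

theorem exp_pow_mul_cos_add_sin (a b θ : ℂ) {n d : ℕ} (hn : n ≤ d) :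
    Complex.exp (θ * Complex.I) ^ d * (a * Complex.cos (n * θ) + b * Complex.sin (n * θ)) =
      (a - b * Complex.I) / 2 * Complex.exp (θ * Complex.I) ^ (d + n) +
        (a + b * Complex.I) / 2 * Complex.exp (θ * Complex.I) ^ (d - n) := by
  have exp_pos : Complex.exp (n * θ * Complex.I) = Complex.exp (θ * Complex.I) ^ n := by
    rw [← Complex.exp_nat_mul, mul_assoc]
  have exp_neg : Complex.exp (-(n * θ) * Complex.I) = (Complex.exp (θ * Complex.I) ^ n)⁻¹ := by
    rw [neg_mul, Complex.exp_neg, exp_pos]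
  rw [Complex.cos, Complex.sin, exp_pos, exp_neg, pow_sub₀ _ (Complex.exp_ne_zero _) hn]
  ring

section TrigPoly

open Polynomial

variable {d : ℕ}

/-- The position, in a coefficient vector `(c₀, …, c_{2d})`, of the coefficient of
`cos ((l + 1) θ)`. The frequencies `1, …, d` are numbered from `0` by `Fin d`. -/
def cosIndex (l : Fin d) : Fin (2 * d + 1) := ⟨2 * (l : ℕ) + 1, by omega⟩

/-- The position, in a coefficient vector `(c₀, …, c_{2d})`, of the coefficient of
`sin ((l + 1) θ)`. -/
def sinIndex (l : Fin d) : Fin (2 * d + 1) := ⟨2 * (l : ℕ) + 2, by omega⟩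

theorem eq_zero_or_eq_cosIndex_or_eq_sinIndex (k : Fin (2 * d + 1)) :
    k = 0 ∨ (∃ l, k = cosIndex l) ∨ ∃ l, k = sinIndex l := by
  obtain ⟨_ | n, hn⟩ := k
  · exact .inl rfl
  · obtain ⟨l, rfl | rfl⟩ := n.even_or_odd'
    · exact .inr (.inl ⟨⟨l, by omega⟩, rfl⟩)
    · exact .inr (.inr ⟨⟨l, by omega⟩, rfl⟩)

/-- The real trigonometric polynomial of degree at most `d` with coefficient vector `c`, in the
ordering `1, cos θ, sin θ, cos (2 θ), sin (2 θ), …` of the basis functions. -/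
noncomputable def trigPoly (c : Fin (2 * d + 1) → ℝ) (θ : ℝ) : ℝ :=
  c 0 + ∑ l : Fin d, (c (cosIndex l) * Real.cos (((l + 1 : ℕ) : ℝ) * θ) +
    c (sinIndex l) * Real.sin (((l + 1 : ℕ) : ℝ) * θ))

namespace trigPoly

/-- The algebraic polynomial `z ^ d * trigPoly c θ` in `z = exp (θ * I)`. -/
noncomputable def numerator (c : Fin (2 * d + 1) → ℝ) : ℂ[X] :=
  C (c 0 : ℂ) * X ^ d + ∑ l : Fin d,
    (C ((c (cosIndex l) - c (sinIndex l) * Complex.I) / 2) * X ^ (d + (l + 1 : ℕ)) +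
      C ((c (cosIndex l) + c (sinIndex l) * Complex.I) / 2) * X ^ (d - (l + 1 : ℕ)))

theorem degree_numerator_lt (c : Fin (2 * d + 1) → ℝ) :
    (numerator c).degree < (2 * d + 1 : ℕ) := by
  rw [← mem_degreeLT]
  have monomial_mem (a : ℂ) {n : ℕ} (hn : n < 2 * d + 1) : C a * X ^ n ∈ degreeLT ℂ (2 * d + 1) :=
    mem_degreeLT.mpr ((degree_C_mul_X_pow_le n a).trans_lt (mod_cast hn))
  exact add_mem (monomial_mem _ (by omega)) (sum_mem fun l _ =>
    add_mem (monomial_mem _ (by omega)) (monomial_mem _ (by omega)))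

theorem coeff_numerator_self (c : Fin (2 * d + 1) → ℝ) : (numerator c).coeff d = c 0 := by
  have hne (l : Fin d) : d ≠ d + (l + 1) ∧ d ≠ d - (l + 1) := by omega
  simp [numerator, coeff_X_pow, hne]

theorem coeff_numerator_add (c : Fin (2 * d + 1) → ℝ) (m : Fin d) :
    (numerator c).coeff (d + (m + 1)) =
      (c (cosIndex m) - c (sinIndex m) * Complex.I) / 2 := by
  have hne (l : Fin d) : d + (m + 1) ≠ d - (l + 1) := by omega
  simp [numerator, coeff_X_pow, hne, Fin.val_inj]

theorem numerator_injective : Function.Injective (numerator (d := d)) := by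
  intro c c' h
  have hconst : (c 0 : ℂ) = c' 0 := by
    simpa only [coeff_numerator_self] using congrArg (coeff · d) h
  have hfreq (l : Fin d) : c (cosIndex l) = c' (cosIndex l) ∧ c (sinIndex l) = c' (sinIndex l) := by
    have hcoeff := congrArg (coeff · (d + (l + 1))) h
    simpa [coeff_numerator_add, Complex.ext_iff] using hcoeff
  funext k
  obtain rfl | ⟨l, rfl⟩ | ⟨l, rfl⟩ := eq_zero_or_eq_cosIndex_or_eq_sinIndex k
  · exact mod_cast hconst
  · exact (hfreq l).1
  · exact (hfreq l).2

theorem eval_numerator (c : Fin (2 * d + 1) → ℝ) (θ : ℝ) :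
    (numerator c).eval (Complex.exp (θ * Complex.I)) =
      Complex.exp (θ * Complex.I) ^ d * trigPoly c θ := by
  simp only [numerator, trigPoly, eval_add, eval_mul, eval_C, eval_pow, eval_X, eval_finsetSum,
    Complex.ofReal_add, Complex.ofReal_sum, mul_add, Finset.mul_sum, mul_comm (c 0 : ℂ)]
  congr! 2 with l
  rw [← exp_pow_mul_cos_add_sin _ _ _ (by omega)]
  push_cast
  ring

theorem coeff_eq_of_eval_index_eq {ι : Type*} {s : Finset ι} {θ : ι → ℝ}
    (hθ : Set.InjOn (fun i => Circle.exp (θ i)) s) (hs : 2 * d < s.card)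
    {c c' : Fin (2 * d + 1) → ℝ} (h : ∀ i ∈ s, trigPoly c (θ i) = trigPoly c' (θ i)) :
    c = c' := by
  have degree_lt (c : Fin (2 * d + 1) → ℝ) : (numerator c).degree < s.card :=
    (degree_numerator_lt c).trans_le (mod_cast hs)
  have exp_injOn : Set.InjOn (fun i => Complex.exp (θ i * Complex.I)) s := fun i hi j hj hij =>
    hθ hi hj (Circle.ext (by simpa only [Circle.coe_exp] using hij))
  refine numerator_injective (eq_of_degrees_lt_of_eval_index_eq s exp_injOn
    (degree_lt c) (degree_lt c') fun i hi => ?_)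
  rw [eval_numerator, eval_numerator, h i hi]

end trigPoly

end TrigPoly

theorem injOn_mod_Icc_one (T : ℕ) : Set.InjOn (· % T) (Finset.Icc 1 T : Set ℕ) := by
  apply Finset.injOn_of_card_image_eq
  rw [← Finset.Ico_add_one_right_eq_Icc, add_comm T, Nat.image_Ico_mod]
  simp

theorem injOn_circleExp_two_pi_mul_div {T : ℕ} [NeZero T] {s : Set ℕ} (hs : s.InjOn (· % T)) :
    s.InjOn fun t : ℕ => Circle.exp (2 * Real.pi * t / T) := by
  have exp_eq_toCircle (t : ℕ) :
      Circle.exp (2 * Real.pi * t / T) = ZMod.toCircle (t : ZMod T) := by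
    ext
    rw [ZMod.toCircle_natCast, Circle.coe_exp]
    push_cast
    ring_nf
  intro t ht t' ht' h
  simp only [exp_eq_toCircle] at h
  exact hs ht ht' ((ZMod.natCast_eq_natCast_iff' t t' T).mp (ZMod.injective_toCircle h))

section Softmax

variable {K d T : ℕ}

theorem trigWeight_eq_exp_trigPoly (β : Fin K → Fin (K - 1) → Fin (2 * d + 1) → ℝ)
    (i : Fin K) (j : Fin (K - 1)) (t : ℕ) :
    trigWeight K d T β i j t = Real.exp (trigPoly (β i j) (2 * Real.pi * t / T)) := by
  have angle_eq (l : ℕ) : ((l + 1 : ℕ) : ℝ) * (2 * Real.pi * t / T) =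
      2 * Real.pi * ((l : ℝ) + 1) * t / T := by
    push_cast
    ring
  simp only [trigPoly, angle_eq]
  rfl

theorem trigWeight_eq_softmaxQ_div_softmaxQ (β : Fin K → Fin (K - 1) → Fin (2 * d + 1) → ℝ)
    (i : Fin K) (j : Fin (K - 1)) (t : ℕ) :
    trigWeight K d T β i j t =
      softmaxQ K d T β t i (j.castLE (Nat.sub_le K 1)) /
        softmaxQ K d T β t i ⟨K - 1, Nat.sub_one_lt_of_lt i.isLt⟩ := by
  have normalizer_pos : 0 < 1 + ∑ j' : Fin (K - 1), trigWeight K d T β i j' t :=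
    add_pos_of_pos_of_nonneg one_pos (Finset.sum_nonneg fun _ _ => (Real.exp_pos _).le)
  simp [softmaxQ, normalizer_pos.ne']

theorem trigPoly_eq_of_softmaxQ_eq {β β' : Fin K → Fin (K - 1) → Fin (2 * d + 1) → ℝ} {t : ℕ}
    (h : softmaxQ K d T β t = softmaxQ K d T β' t) (i : Fin K) (j : Fin (K - 1)) :
    trigPoly (β i j) (2 * Real.pi * t / T) = trigPoly (β' i j) (2 * Real.pi * t / T) := by
  apply Real.exp_injective
  rw [← trigWeight_eq_exp_trigPoly, ← trigWeight_eq_exp_trigPoly,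
    trigWeight_eq_softmaxQ_div_softmaxQ, trigWeight_eq_softmaxQ_div_softmaxQ, h]

theorem softmaxQ_injective_general [NeZero T] {s : Finset ℕ}
    (hs : Set.InjOn (· % T) (s : Set ℕ)) (hcard : 2 * d < s.card)
    {β β' : Fin K → Fin (K - 1) → Fin (2 * d + 1) → ℝ}
    (h : ∀ t ∈ s, softmaxQ K d T β t = softmaxQ K d T β' t) : β = β' := by
  funext i j
  exact trigPoly.coeff_eq_of_eval_index_eq (injOn_circleExp_two_pi_mul_div hs) hcard
    fun t ht => trigPoly_eq_of_softmaxQ_eq (h t ht) i j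

end Softmax

/-- If T > 2d, the parameter β of the softmax parametrization is
identified by the transition matrices Q^β(1),…,Q^β(T). -/
theorem softmaxQ_injective (K d T : ℕ) (hK : 2 ≤ K) (hT : 2 * d < T)
    (β β' : Fin K → Fin (K - 1) → Fin (2 * d + 1) → ℝ)
    (h : ∀ t ∈ Finset.Icc 1 T, softmaxQ K d T β t = softmaxQ K d T β' t) :
    β = β' := by
  have : NeZero T := ⟨by omega⟩
  exact softmaxQ_injective_general (injOn_mod_Icc_one T) (by simpa using hT) h
end

section
/- Let K ≥ 2, d ≥ 0 and T ≥ 1 be integers. For β = (β_{ijl})_{1≤i≤K,1≤j≤K−1,0≤l≤2d} ∈ ℝ^{K(K−1)(2d+1)} and t ∈ {1,…,T}, define the K×K stochastic matrix Q^β(t) by Q^β_{ij}(t) = g^β_{ij}(t)/(1+∑_{j'=1}^{K−1} g^β_{ij'}(t)) for j ≤ K−1 and Q^β_{iK}(t) = 1/(1+∑_{j'=1}^{K−1} g^β_{ij'}(t)), where g^β_{ij}(t) = exp(β_{ij0} + ∑_{l=1}^d [β_{ij,2l−1}cos(2πlt/T) + β_{ij,2l}sin(2πlt/T)]). Then the set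 {β ∈ ℝ^{K(K−1)(2d+1)} : ∃ t ∈ {1,…,T}, Q^β(t) is not invertible} has Lebesgue measure zero. In particular, for almost every β, the matrices Q^β(1),…,Q^β(T) are all invertible. -/
open Real MeasureTheory

/-! The denominators of the softmax only rescale the rows, so `Q^β(t)` is invertible if and only if
the matrix of unnormalised weights is. The determinant of the latter is a real-analytic function of
`β`, hence vanishes only on a null set unless it vanishes identically, which a single parameter with
nonsingular weights rules out. -/

open scoped ContDiff

section AnalyticZeroSet

variable {F : Type*} [NormedAddCommGroup F] [NormedSpace ℝ F]

theorem ae_ne_zero_of_analyticOnNhd_real {f : ℝ → F} (hf : AnalyticOnNhd ℝ f Set.univ) {x₀ : ℝ}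
    (hx₀ : f x₀ ≠ 0) : ∀ᵐ x : ℝ, f x ≠ 0 := by
  have hcodisc : f ⁻¹' {0}ᶜ ∈ Filter.codiscreteWithin Set.univ :=
    hf.preimage_zero_mem_codiscreteWithin hx₀ (Set.mem_univ x₀) isConnected_univ
  have hae := ae_restrict_le_codiscreteWithin (μ := volume) MeasurableSet.univ hcodisc
  rwa [Measure.restrict_univ] at hae

variable {E : Type*} [NormedAddCommGroup E] [NormedSpace ℝ E] [FiniteDimensional ℝ E]
  [MeasurableSpace E] [BorelSpace E] (μ : Measure E) [μ.IsAddHaarMeasure]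

theorem ae_of_ae_add_smul {p : E → Prop} (x₀ : E) {t : ℝ} (ht : t ≠ 0)
    (h : ∀ᵐ v ∂μ, p (x₀ + t • v)) : ∀ᵐ x ∂μ, p x := by
  have hpre : μ ((t • ·) ⁻¹' ((x₀ + ·) ⁻¹' {x | ¬ p x})) = 0 := h
  rw [Measure.addHaar_preimage_smul μ ht, measure_preimage_add] at hpre
  exact (mul_eq_zero.1 hpre).resolve_left (by simp [ht])

/-- `f` is nonzero at almost every point of each line through `x₀`. By Fubini, for almost every `t`
it is then nonzero at `x₀ + t • v` for almost every `v`, and one such `t ≠ 0` is enough. -/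
theorem ae_ne_zero_of_analyticOnNhd {f : E → F} (hf : AnalyticOnNhd ℝ f Set.univ) {x₀ : E}
    (hx₀ : f x₀ ≠ 0) : ∀ᵐ x ∂μ, f x ≠ 0 := by
  have hline (v : E) : ∀ᵐ t : ℝ, f (x₀ + t • v) ≠ 0 :=
    ae_ne_zero_of_analyticOnNhd_real (x₀ := 0)
      (fun t _ => (hf _ (Set.mem_univ _)).comp (g := f) (f := fun t : ℝ => x₀ + t • v)
        (by fun_prop)) (by simpa using hx₀)
  have hopen : IsOpen {q : E × ℝ | f (x₀ + q.2 • q.1) ≠ 0} :=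
    isOpen_ne.preimage (hf.continuous.comp (by fun_prop))
  have hswap : ∀ᵐ t : ℝ, ∀ᵐ v ∂μ, f (x₀ + t • v) ≠ 0 :=
    (Measure.ae_ae_comm hopen.measurableSet).1 (.of_forall hline)
  obtain ⟨t, ht, ht₀⟩ := (hswap.and (Measure.ae_ne volume (0 : ℝ))).exists
  exact ae_of_ae_add_smul μ x₀ ht₀ ht

end AnalyticZeroSet

section Determinant

variable {ι : Type*} [Fintype ι] [DecidableEq ι]

theorem contDiff_matrix_det {𝕜 E : Type*} [NontriviallyNormedField 𝕜] [NormedAddCommGroup E]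
    [NormedSpace 𝕜 E] {n : ℕ∞ω} {A : E → Matrix ι ι 𝕜}
    (hA : ∀ i j, ContDiff 𝕜 n fun x => A x i j) : ContDiff 𝕜 n fun x => (A x).det := by
  simp only [Matrix.det_apply']
  fun_prop

theorem det_diagonal_add_ones_ne_zero {R : Type*} [CommRing R] [IsDomain R] {d : ι → R} {k : ι}
    (hk : d k = 0) (hd : ∀ i, i ≠ k → d i ≠ 0) :
    (Matrix.diagonal d + Matrix.of fun _ _ => 1).det ≠ 0 := by
  intro hdet
  obtain ⟨v, hv, hker⟩ := Matrix.exists_mulVec_eq_zero_iff.2 hdet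
  have hrow (i : ι) : d i * v i + ∑ j, v j = 0 := by
    simpa [Matrix.mulVec, dotProduct, Matrix.diagonal_apply, add_mul, Finset.sum_add_distrib]
      using congrFun hker i
  have hsum : ∑ j, v j = 0 := by simpa [hk] using hrow k
  have hne (i : ι) (hi : i ≠ k) : v i = 0 :=
    (mul_eq_zero.1 (by simpa [hsum] using hrow i)).resolve_left (hd i hi)
  have hvk : v k = 0 := by
    rwa [Finset.sum_eq_single k (fun i _ hi => hne i hi) (by simp)] at hsum
  exact hv (funext fun i => if hi : i = k then hi ▸ hvk else hne i hi)

end Determinant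

/-- The matrix of unnormalised transition weights `g^β_{ij}(t)`, with `g^β_{iK}(t) = 1` for the
reference state `K`; dividing each row by its sum gives `softmaxQ`. -/
noncomputable def softmaxWeight (K d T : ℕ) (β : Fin K → Fin (K - 1) → Fin (2 * d + 1) → ℝ)
    (t : ℕ) : Matrix (Fin K) (Fin K) ℝ :=
  Matrix.of fun i j => if h : (j : ℕ) < K - 1 then trigWeight K d T β i ⟨j, h⟩ t else 1

section SoftmaxWeight

variable (K d T : ℕ) (β : Fin K → Fin (K - 1) → Fin (2 * d + 1) → ℝ) (t : ℕ)

theorem one_add_sum_trigWeight_pos (i : Fin K) :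
    0 < 1 + ∑ j : Fin (K - 1), trigWeight K d T β i j t :=
  add_pos_of_pos_of_nonneg one_pos (Finset.sum_nonneg fun _ _ => (Real.exp_pos _).le)

theorem softmaxQ_eq_inv_sum_mul_softmaxWeight :
    softmaxQ K d T β t = Matrix.of fun i j =>
      (1 + ∑ j' : Fin (K - 1), trigWeight K d T β i j' t)⁻¹ * softmaxWeight K d T β t i j := by
  ext i j
  simp only [softmaxQ, softmaxWeight, Matrix.of_apply]
  split_ifs <;> rw [div_eq_inv_mul]

theorem isUnit_softmaxQ_iff : IsUnit (softmaxQ K d T β t) ↔ (softmaxWeight K d T β t).det ≠ 0 := by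
  have hscale : ∏ i, (1 + ∑ j : Fin (K - 1), trigWeight K d T β i j t)⁻¹ ≠ 0 :=
    Finset.prod_ne_zero_iff.2 fun i _ => inv_ne_zero (one_add_sum_trigWeight_pos K d T β t i).ne'
  rw [Matrix.isUnit_iff_isUnit_det, isUnit_iff_ne_zero, softmaxQ_eq_inv_sum_mul_softmaxWeight,
    Matrix.det_mul_column, mul_ne_zero_iff_left hscale]

theorem contDiff_softmaxWeight_apply {n : ℕ∞ω} (i j : Fin K) :
    ContDiff ℝ n fun β => softmaxWeight K d T β t i j := by
  by_cases h : (j : ℕ) < K - 1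
  · simp only [softmaxWeight, Matrix.of_apply, dif_pos h, trigWeight]
    fun_prop
  · simpa only [softmaxWeight, Matrix.of_apply, dif_neg h] using contDiff_const

end SoftmaxWeight

/-- The parameter `β_{ijl} = 1_{i=j} 1_{l=0} log 2`, whose weights are `2` at the diagonal
entries outside the last row and `1` elsewhere. -/
noncomputable def diagonalParam (K d : ℕ) : Fin K → Fin (K - 1) → Fin (2 * d + 1) → ℝ :=
  fun i j l => if (i : ℕ) = j ∧ (l : ℕ) = 0 then Real.log 2 else 0

theorem trigWeight_diagonalParam (K d T : ℕ) (i : Fin K) (j : Fin (K - 1)) (t : ℕ) :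
    trigWeight K d T (diagonalParam K d) i j t = if (i : ℕ) = j then 2 else 1 := by
  by_cases h : (i : ℕ) = j <;> simp [trigWeight, diagonalParam, h, Real.exp_log]

theorem softmaxWeight_diagonalParam (K d T t : ℕ) :
    softmaxWeight K d T (diagonalParam K d) t =
      Matrix.diagonal (fun i : Fin K => if (i : ℕ) < K - 1 then 1 else 0) +
        Matrix.of fun _ _ => 1 := by
  ext i j
  simp only [softmaxWeight, Matrix.of_apply, trigWeight_diagonalParam, Matrix.add_apply,
    Matrix.diagonal_apply, Fin.ext_iff]
  split_ifs <;> first | omega | norm_num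

theorem det_softmaxWeight_diagonalParam_ne_zero {K : ℕ} (hK : 0 < K) (d T t : ℕ) :
    (softmaxWeight K d T (diagonalParam K d) t).det ≠ 0 := by
  rw [softmaxWeight_diagonalParam]
  refine det_diagonal_add_ones_ne_zero (k := ⟨K - 1, Nat.sub_one_lt hK.ne'⟩)
    (if_neg (lt_irrefl _)) fun i hi => ?_
  have hlt : (i : ℕ) < K - 1 := by
    have hne : (i : ℕ) ≠ K - 1 := Fin.val_ne_iff.2 hi
    omega
  simp [hlt]

theorem ae_isUnit_softmaxQ {K : ℕ} (hK : 0 < K) (d T t : ℕ) :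
    ∀ᵐ β : Fin K → Fin (K - 1) → Fin (2 * d + 1) → ℝ, IsUnit (softmaxQ K d T β t) := by
  have : (volume : Measure (Fin (K - 1) → Fin (2 * d + 1) → ℝ)).IsAddHaarMeasure :=
    Measure.pi.isAddHaarMeasure _
  have : (volume : Measure (Fin K → Fin (K - 1) → Fin (2 * d + 1) → ℝ)).IsAddHaarMeasure :=
    Measure.pi.isAddHaarMeasure _
  have hanalytic : AnalyticOnNhd ℝ (fun β => (softmaxWeight K d T β t).det) Set.univ :=
    (contDiff_matrix_det (contDiff_softmaxWeight_apply K d T t)).analyticOnNhd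
  simpa only [isUnit_softmaxQ_iff] using
    ae_ne_zero_of_analyticOnNhd volume hanalytic (det_softmaxWeight_diagonalParam_ne_zero hK d T t)

/-- The set of parameters β for which some transition matrix
Q^β(t), t ∈ {1,…,T}, fails to be invertible has Lebesgue measure zero. -/
theorem softmaxQ_ae_invertible (K d T : ℕ) (hK : 2 ≤ K) (hT : 1 ≤ T) :
    volume {β : Fin K → Fin (K - 1) → Fin (2 * d + 1) → ℝ |
      ∃ t ∈ Finset.Icc 1 T, ¬ IsUnit (softmaxQ K d T β t)} = 0 := by
  have hK₀ : 0 < K := two_pos.trans_le hK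
  have hall : ∀ᵐ β : Fin K → Fin (K - 1) → Fin (2 * d + 1) → ℝ,
      ∀ t ∈ Finset.Icc 1 T, IsUnit (softmaxQ K d T β t) :=
    (Filter.eventually_all_finset _).2 fun t _ => ae_isUnit_softmaxQ hK₀ d T t
  simpa only [ae_iff, not_forall, exists_prop] using hall
end
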